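/- For every R' > 0 and every open neighborhood U of 0 in V = ℝ^d there exists R₀ > 0 such that for every R > R₀ there exist a finite subset Y ⊆ U and, for each y ∈ Y, an analytic map Φ_y from the open ball {λ ∈ L : ‖λ‖ < R'} to the Banach space of bounded continuous functions V → ℂ (with the supremum norm), such that for every λ with ‖λ‖ < R', every f ∈ 𝔓(λ), and every v ∈ V, one has f(v) = Σ_{y ∈ Y} f(y) · Φ_y(λ)(v) · e^{R‖v‖}. (In other words, the family of finite-dimensional spaces 𝔓(λ) of polynomial exponential functions, viewed inside the weighted sup-norm space of functions f with sup_v |f(v)| e^{−R‖v‖} < ∞, admits a holomorphic section with respect to the restriction map to the finite set Y.) -/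

import Mathlib

open scoped Classical in
/-- The space `𝔓(λ)` of polynomial exponential functions on `V = ℝ^d` attached to a tuple
`λ = (λ₁, …, λₙ)` of ℝ-linear maps `V → ℂ`: functions of the form
`v ↦ Σ_μ e^{μ(v)} P_μ(v)` where `μ` runs over the distinct values among the `λᵢ` and
`P_μ` is a polynomial of total degree `< #{i : λᵢ = μ}`. -/
noncomputable def polyExpSpace {d n : ℕ}
    (lam : Fin n → (EuclideanSpace ℝ (Fin d) →L[ℝ] ℂ)) :
    Set (EuclideanSpace ℝ (Fin d) → ℂ) :=
  { f | ∃ P : (EuclideanSpace ℝ (Fin d) →L[ℝ] ℂ) → MvPolynomial (Fin d) ℂ,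
      (∀ i : Fin n, (P (lam i)).totalDegree <
        (Finset.univ.filter fun j : Fin n => lam j = lam i).card) ∧
      ∀ v, f v = ∑ μ ∈ Finset.univ.image lam,
        Complex.exp (μ v) * MvPolynomial.eval (fun j => ((v j : ℝ) : ℂ)) (P μ) }

/-!
In one variable, `e^{μz} P(z)` with `deg P < #{i | lᵢ = μ}` is killed by `∏ᵢ (d/dz - lᵢ)`, so it is
the first coordinate of a solution of `dx/dz = B x`, where `B` is bidiagonal with diagonal `l` and
ones above it. This system is observable through its first coordinate, and remains so when it is
only sampled at the times `0, h, …, (n - 1) h` with `h` small. Inverting the sampled observability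
matrix recovers the initial state, hence the whole function, from the samples; the coefficients are
holomorphic in `l` and grow at most like `e^{r|z|}` as soon as `‖B‖ < r`. In several variables the
exponential monomials are products of one-variable ones, and so are the reproducing kernels.
-/

open Filter Topology Function
open scoped BoundedContinuousFunction

namespace PolyExp

section Observability

open Polynomial

variable {𝕜 E : Type*} [NontriviallyNormedField 𝕜] [NormedAddCommGroup E] [NormedSpace 𝕜 E]

/-- The observability map `u ↦ (ψ u, ψ (A u), …, ψ (Aⁿ⁻¹ u))` of an operator `A` observed through
the functional `ψ`. It is written as a sum so that its analytic dependence on `A` is apparent. -/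
noncomputable def observability (ψ : E →L[𝕜] 𝕜) (n : ℕ) (A : E →L[𝕜] E) : E →L[𝕜] (Fin n → 𝕜) :=
  ∑ j : Fin n, (ContinuousLinearMap.single 𝕜 (fun _ => 𝕜) j ∘L ψ) ∘L A ^ (j : ℕ)

variable (ψ : E →L[𝕜] 𝕜) (n : ℕ)

lemma observability_apply (A : E →L[𝕜] E) (u : E) (j : Fin n) :
    observability ψ n A u j = ψ ((A ^ (j : ℕ)) u) := by
  simp [observability, Pi.single_apply]

lemma analyticAt_observability (A : E →L[𝕜] E) : AnalyticAt 𝕜 (observability ψ n) A :=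
  Finset.analyticAt_fun_sum _ fun j _ =>
    (ContinuousLinearMap.compL 𝕜 E E (Fin n → 𝕜)
      (ContinuousLinearMap.single 𝕜 (fun _ => 𝕜) j ∘L ψ)).analyticAt _ |>.comp
        (analyticAt_id.pow (j : ℕ))

lemma continuous_observability : Continuous (observability ψ n) := by
  unfold observability
  fun_prop

variable {ψ n}

lemma observability_injective_of_aeval {A : E →L[𝕜] E} {q : 𝕜[X]} (hq : q.natDegree ≤ 1)
    (h : Injective (observability ψ n (aeval A q))) : Injective (observability ψ n A) := by
  rw [injective_iff_map_eq_zero] at h ⊢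
  intro u hu
  have hψ (m : ℕ) (hm : m < n) : ψ ((A ^ m) u) = 0 := by
    simpa only [observability_apply, Pi.zero_apply] using congrFun hu ⟨m, hm⟩
  refine h u (funext fun j => ?_)
  have hdeg : (q ^ (j : ℕ)).natDegree < n :=
    (natDegree_pow_le_of_le (j : ℕ) hq).trans_lt (by simp)
  rw [observability_apply, ← map_pow, aeval_eq_sum_range' hdeg]
  simp only [sum_apply, smul_apply, map_sum, map_smul]
  exact Finset.sum_eq_zero fun m hm => by rw [hψ m (Finset.mem_range.1 hm), smul_zero]

end Observability

section Sampling

open Polynomial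

lemma tendsto_inv_smul_exp_smul_sub_one {𝕜 𝔸 : Type*} [RCLike 𝕜] [NormedRing 𝔸]
    [NormedAlgebra 𝕜 𝔸] [CompleteSpace 𝔸] (a : 𝔸) :
    Tendsto (fun p : 𝕜 × 𝔸 => p.1⁻¹ • (NormedSpace.exp (p.1 • p.2) - 1)) (𝓝[≠] 0 ×ˢ 𝓝 a)
      (𝓝 a) := by
  have hfst : Tendsto Prod.fst (𝓝[≠] (0 : 𝕜) ×ˢ 𝓝 a) (𝓝 0) :=
    tendsto_fst.mono_right nhdsWithin_le_nhds
  have hsnd : Tendsto (fun p : 𝕜 × 𝔸 => p.1⁻¹ • p.1 • p.2) (𝓝[≠] 0 ×ˢ 𝓝 a) (𝓝 a) :=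
    tendsto_snd.congr' <| (tendsto_fst.eventually self_mem_nhdsWithin).mono fun p hp =>
      (inv_smul_smul₀ hp p.2).symm
  have hsmul : Tendsto (fun p : 𝕜 × 𝔸 => p.1 • p.2) (𝓝[≠] 0 ×ˢ 𝓝 a) (𝓝 0) := by
    simpa using hfst.smul (tendsto_snd (g := 𝓝 a))
  have hexp : (fun p : 𝕜 × 𝔸 => NormedSpace.exp (p.1 • p.2) - 1 - p.1 • p.2)
      =o[𝓝[≠] 0 ×ˢ 𝓝 a] fun p => p.1 • p.2 := by
    simpa [comp_def] using
      (hasFDerivAt_exp_zero (𝕂 := 𝕜) (𝔸 := 𝔸)).isLittleO.comp_tendsto hsmul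
  have hdiff : Tendsto (fun p : 𝕜 × 𝔸 =>
      p.1⁻¹ • (NormedSpace.exp (p.1 • p.2) - 1 - p.1 • p.2)) (𝓝[≠] 0 ×ˢ 𝓝 a) (𝓝 0) :=
    (Asymptotics.isLittleO_one_iff ℝ).1 <|
      ((Asymptotics.isBigO_refl _ _).smul_isLittleO hexp).trans_isBigO (hsnd.isBigO_one ℝ)
  simpa only [← smul_add, sub_add_cancel, zero_add] using hdiff.add hsnd

variable {𝕜 E : Type*} [RCLike 𝕜] [NormedAddCommGroup E] [NormedSpace 𝕜 E]
  [FiniteDimensional 𝕜 E] {ψ : E →L[𝕜] 𝕜} {n : ℕ}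

theorem eventually_observability_exp_injective {K : Set (E →L[𝕜] E)} (hK : IsCompact K)
    (hobs : ∀ A ∈ K, Injective (observability ψ n A)) :
    ∀ᶠ h : 𝕜 in 𝓝[≠] 0, ∀ A ∈ K, Injective (observability ψ n (NormedSpace.exp (h • A))) := by
  have : CompleteSpace E := FiniteDimensional.complete 𝕜 E
  have hopen : IsOpen {A : E →L[𝕜] E | Injective (observability ψ n A)} :=
    ContinuousLinearMap.isOpen_injective.preimage (continuous_observability ψ n)
  have hnear : ∀ᶠ p : 𝕜 × (E →L[𝕜] E) in 𝓝[≠] 0 ×ˢ 𝓝ˢ K,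
      Injective (observability ψ n (NormedSpace.exp (p.1 • p.2))) := by
    simp only [hK.prod_nhdsSet_eq_biSup, eventually_iSup]
    intro A hA
    -- `h⁻¹ (exp (h A) - 1)` is close to `A` and is a polynomial of degree one in `exp (h A)`.
    filter_upwards [(tendsto_inv_smul_exp_smul_sub_one A).eventually
      (hopen.mem_nhds (hobs A hA))] with p hp
    refine observability_injective_of_aeval (q := p.1⁻¹ • (X - 1)) ?_ (by simpa using hp)
    compute_degree
  exact hnear.curry.mono fun h hh => hh.self_of_nhdsSet

end Sampling

section WeightedExp

variable {𝕜 X A : Type*} [RCLike 𝕜] [TopologicalSpace X] [NormedRing A] [NormedAlgebra 𝕜 A]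

/-- The continuous linear map `a ↦ (x ↦ g x • a)` attached to a bounded continuous scalar
function `g`. -/
noncomputable def smulConstCLM (E : Type*) [NormedAddCommGroup E] [NormedSpace 𝕜 E] (g : X →ᵇ 𝕜) :
    E →L[𝕜] X →ᵇ E :=
  LinearMap.mkContinuous
    { toFun a := g • BoundedContinuousFunction.const X a
      map_add' a b := BoundedContinuousFunction.ext fun x => smul_add (g x) a b
      map_smul' c a := BoundedContinuousFunction.ext fun x => smul_comm (g x) c a }
    ‖g‖ fun a => (norm_smul_le g _).trans <|
      mul_le_mul_of_nonneg_left (BoundedContinuousFunction.norm_const_le a) (norm_nonneg g)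

lemma smulConstCLM_apply (g : X →ᵇ 𝕜) (a : A) (x : X) : smulConstCLM A g a x = g x • a :=
  rfl

lemma norm_smulConstCLM_le (g : X →ᵇ 𝕜) : ‖smulConstCLM A g‖ ≤ ‖g‖ :=
  LinearMap.mkContinuous_norm_le _ (norm_nonneg g) _

lemma exists_analyticOnNhd_hasSum_smul_pow [CompleteSpace A] {r : ℝ} (hr : 0 < r) {g : ℕ → X →ᵇ 𝕜}
    (hg : ∀ k, ‖g k‖ ≤ (r ^ k)⁻¹) :
    ∃ F : A → X →ᵇ A, AnalyticOnNhd 𝕜 F (Metric.ball 0 r) ∧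
      ∀ a ∈ Metric.ball 0 r, ∀ x, HasSum (fun k => g k x • a ^ k) (F a x) := by
  set p : FormalMultilinearSeries 𝕜 A (X →ᵇ A) := fun k =>
    (smulConstCLM A (g k)).compContinuousMultilinearMap
      (ContinuousMultilinearMap.mkPiAlgebraFin 𝕜 k A)
  have hp (k : ℕ) : ‖p k‖ * r ^ k ≤ max 1 ‖(1 : A)‖ :=
    calc ‖p k‖ * r ^ k ≤ (r ^ k)⁻¹ * max 1 ‖(1 : A)‖ * r ^ k := by
          gcongr
          refine (ContinuousLinearMap.norm_compContinuousMultilinearMap_le _ _).trans ?_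
          gcongr
          · exact (norm_smulConstCLM_le _).trans (hg k)
          · exact ContinuousMultilinearMap.norm_mkPiAlgebraFin_le
      _ = max 1 ‖(1 : A)‖ := by field_simp
  have hradius : ENNReal.ofReal r ≤ p.radius :=
    p.le_radius_of_bound (r := r.toNNReal) _ fun k => by rw [Real.coe_toNNReal r hr.le]; exact hp k
  have hsum := p.hasFPowerSeriesOnBall ((ENNReal.ofReal_pos.2 hr).trans_le hradius)
  have hball : Metric.ball (0 : A) r ⊆ Metric.eball 0 p.radius := by
    rw [← Metric.eball_ofReal]
    exact Metric.eball_subset_eball hradius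
  refine ⟨p.sum, hsum.analyticOnNhd.mono hball, fun a ha x => ?_⟩
  simpa [p, smulConstCLM_apply] using
    (BoundedContinuousFunction.evalCLM 𝕜 x).hasSum (hsum.hasSum_sub (hball ha))

variable {φ : X → 𝕜} {w : X → ℝ}

lemma norm_pow_div_factorial_mul_exp_neg_le {r : ℝ} (hr : 0 < r) {z : 𝕜} {t : ℝ} (hz : ‖z‖ ≤ t)
    (k : ℕ) : ‖(Real.exp (-(r * t)) : 𝕜) * (z ^ k / k.factorial)‖ ≤ (r ^ k)⁻¹ := by
  have ht : 0 ≤ t := (norm_nonneg z).trans hz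
  rw [norm_mul, norm_div, norm_pow, RCLike.norm_ofReal, RCLike.norm_natCast, Real.abs_exp,
    Real.exp_neg]
  calc (Real.exp (r * t))⁻¹ * (‖z‖ ^ k / k.factorial)
      ≤ (Real.exp (r * t))⁻¹ * (t ^ k / k.factorial) := by gcongr
    _ = (Real.exp (r * t))⁻¹ * ((r * t) ^ k / k.factorial) * (r ^ k)⁻¹ := by
        rw [mul_pow]; field_simp
    _ ≤ (Real.exp (r * t))⁻¹ * Real.exp (r * t) * (r ^ k)⁻¹ := by
        gcongr
        exact Real.pow_div_factorial_le_exp _ (by positivity) k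
    _ = (r ^ k)⁻¹ := by simp

theorem exists_analyticOnNhd_weighted_exp [CompleteSpace A] {r : ℝ} (hr : 0 < r)
    (hφ : Continuous φ) (hw : Continuous w) (hφw : ∀ x, ‖φ x‖ ≤ w x) :
    ∃ F : A → X →ᵇ A, AnalyticOnNhd 𝕜 F (Metric.ball 0 r) ∧ ∀ a ∈ Metric.ball 0 r, ∀ x,
      F a x = (Real.exp (-(r * w x)) : 𝕜) • NormedSpace.exp (φ x • a) := by
  have hbound (k : ℕ) (x : X) := norm_pow_div_factorial_mul_exp_neg_le hr (hφw x) k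
  obtain ⟨F, hF, hsum⟩ := exists_analyticOnNhd_hasSum_smul_pow (A := A) hr
    (g := fun k => .ofNormedAddCommGroup _ (by fun_prop) _ (hbound k))
    fun k => BoundedContinuousFunction.norm_ofNormedAddCommGroup_le _ (by positivity) (hbound k)
  refine ⟨F, hF, fun a ha x => (hsum a ha x).unique ?_⟩
  refine ((NormedSpace.exp_series_hasSum_exp' (𝕂 := 𝕜) (φ x • a)).const_smul _).congr_fun
    fun k => ?_
  simp [smul_pow, smul_smul, div_eq_inv_mul]

end WeightedExp

section SamplingKernel

variable {X : Type*} [TopologicalSpace X] {φ : X → ℝ} {w : X → ℝ} {n : ℕ}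

theorem exists_sampling_kernel (ψ : (Fin n → ℂ) →L[ℂ] ℂ) (h : ℂ) {r : ℝ} (hr : 0 < r)
    (hφ : Continuous φ) (hw : Continuous w) (hφw : ∀ x, |φ x| ≤ w x) :
    ∃ c : Fin n → ((Fin n → ℂ) →L[ℂ] (Fin n → ℂ)) → X →ᵇ ℂ,
      ∀ A, ‖A‖ < r → Injective (observability ψ n (NormedSpace.exp (h • A))) →
        (∀ j, AnalyticAt ℂ (c j) A) ∧
        ∀ u x, ψ (NormedSpace.exp ((φ x : ℂ) • A) u) =
          ∑ j : Fin n, ψ (NormedSpace.exp (((j : ℕ) * h) • A) u) *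
            (c j A x * Real.exp (r * w x)) := by
  obtain ⟨F, hF, hFexp⟩ := exists_analyticOnNhd_weighted_exp (𝕜 := ℂ)
    (A := (Fin n → ℂ) →L[ℂ] (Fin n → ℂ)) hr (Complex.continuous_ofReal.comp hφ) hw
    fun x => (Complex.norm_real (φ x)).trans_le (hφw x)
  set M : ((Fin n → ℂ) →L[ℂ] (Fin n → ℂ)) → (Fin n → ℂ) →L[ℂ] (Fin n → ℂ) :=
    fun A => observability ψ n (NormedSpace.exp (h • A))
  refine ⟨fun j A =>
    (ψ ∘L ContinuousLinearMap.apply ℂ _ (Pi.single j 1)).compLeftContinuousBounded X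
      (F A * smulConstCLM _ (1 : X →ᵇ ℂ) (Ring.inverse (M A))), fun A hA hinj => ?_⟩
  have hunit : IsUnit (M A) :=
    ContinuousLinearMap.isUnit_iff_bijective.2
      ⟨hinj, LinearMap.injective_iff_surjective (f := (M A).toLinearMap).1 hinj⟩
  have hAball : A ∈ Metric.ball 0 r := mem_ball_zero_iff.2 hA
  refine ⟨fun j => ?_, fun u x => ?_⟩
  · have hM : AnalyticAt ℂ M A := (analyticAt_observability ψ n _).comp <|
      (NormedSpace.exp_analytic (𝕂 := ℂ) _).comp (analyticAt_const.fun_smul analyticAt_id)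
    have hinv : AnalyticAt ℂ (fun A => Ring.inverse (M A)) A :=
      (analyticAt_inverse hunit.unit).comp_of_eq hM hunit.unit_spec.symm
    exact (ContinuousLinearMap.analyticAt _ _).comp <|
      (hF A hAball).mul ((ContinuousLinearMap.analyticAt _ _).comp hinv)
  · set y : Fin n → ℂ := M A u
    have hy (j : Fin n) : y j = ψ (NormedSpace.exp (((j : ℕ) * h) • A) u) := by
      let _ : NormedAlgebra ℚ ((Fin n → ℂ) →L[ℂ] (Fin n → ℂ)) := .restrictScalars ℚ ℂ _
      rw [mul_smul, Nat.cast_smul_eq_nsmul, NormedSpace.exp_nsmul]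
      exact observability_apply ψ n _ u j
    have hu : u = ∑ j, y j • Ring.inverse (M A) (Pi.single j 1) := by
      simp only [← map_smul, ← map_sum, ← pi_eq_sum_univ' y]
      exact (DFunLike.congr_fun (Ring.inverse_mul_cancel (M A) hunit) u).symm
    have hweight : Complex.exp (-(r * w x)) * Complex.exp (r * w x) = 1 := by
      rw [← Complex.exp_add, neg_add_cancel, Complex.exp_zero]
    conv_lhs => rw [hu]
    simp only [map_sum, map_smul]
    refine Finset.sum_congr rfl fun j _ => ?_
    simp [hFexp A hAball, smulConstCLM_apply, ← hy,
      mul_right_comm _ _ (Complex.exp (r * w x)), hweight]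

end SamplingKernel

section Bidiagonal

variable {𝕜 : Type*} [NontriviallyNormedField 𝕜]

/-- The nilpotent shift `(x₀, …, xₙ₋₁) ↦ (x₁, …, xₙ₋₁, 0)`. -/
noncomputable def shift (𝕜 : Type*) [NontriviallyNormedField 𝕜] (n : ℕ) :
    (Fin n → 𝕜) →L[𝕜] (Fin n → 𝕜) :=
  ContinuousLinearMap.pi fun k =>
    if h : (k : ℕ) + 1 < n then ContinuousLinearMap.proj ⟨k + 1, h⟩ else 0

/-- The operator whose matrix is upper bidiagonal, with `l` on the diagonal and ones above it. -/
noncomputable def bidiagonal {n : ℕ} (l : Fin n → 𝕜) : (Fin n → 𝕜) →L[𝕜] (Fin n → 𝕜) :=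
  ContinuousLinearMap.mul 𝕜 (Fin n → 𝕜) l + shift 𝕜 n

variable {n : ℕ}

lemma bidiagonal_apply (l x : Fin n → 𝕜) (k : Fin n) :
    bidiagonal l x k = l k * x k + if h : (k : ℕ) + 1 < n then x ⟨k + 1, h⟩ else 0 := by
  simp only [bidiagonal, shift, add_apply, Pi.add_apply, ContinuousLinearMap.mul_apply',
    Pi.mul_apply, ContinuousLinearMap.pi_apply]
  split_ifs <;> simp

lemma norm_bidiagonal_le (l : Fin n → 𝕜) : ‖bidiagonal l‖ ≤ ‖l‖ + ‖shift 𝕜 n‖ :=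
  (norm_add_le _ _).trans <| by gcongr; exact ContinuousLinearMap.opNorm_mul_apply_le 𝕜 _ l

lemma analyticAt_bidiagonal (l : Fin n → 𝕜) : AnalyticAt 𝕜 bidiagonal l :=
  ((ContinuousLinearMap.mul 𝕜 (Fin n → 𝕜)).analyticAt l).add analyticAt_const

lemma continuous_bidiagonal : Continuous (bidiagonal : (Fin n → 𝕜) → _) := by
  unfold bidiagonal
  fun_prop

lemma observability_bidiagonal_injective [NeZero n] (l : Fin n → 𝕜) :
    Injective (observability (ContinuousLinearMap.proj 0) n (bidiagonal l)) := by
  rw [injective_iff_map_eq_zero]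
  intro u hu
  have hzero (k : ℕ) : ∀ j, (h : j + k < n) → (bidiagonal l ^ j) u ⟨k, by omega⟩ = 0 := by
    induction k with
    | zero => exact fun j hj => (observability_apply _ n _ u ⟨j, hj⟩).symm.trans (congrFun hu _)
    | succ k ih =>
      intro j hj
      have hstep := ih (j + 1) (by omega)
      rw [pow_succ', mul_apply_eq_comp, bidiagonal_apply, ih j (by omega), mul_zero, zero_add,
        dif_pos (show k + 1 < n by omega)] at hstep
      exact hstep
  exact funext fun k => hzero k 0 (by simp)

end Bidiagonal

section ExpPolynomial

open Polynomial

lemma eq_exp_smul_apply_of_hasDerivAt {𝕜 E : Type*} [RCLike 𝕜] [NormedAddCommGroup E]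
    [NormedSpace 𝕜 E] [CompleteSpace E] {A : E →L[𝕜] E} {F : 𝕜 → E}
    (hF : ∀ z, HasDerivAt F (A (F z)) z) (z : 𝕜) : F z = NormedSpace.exp (z • A) (F 0) := by
  have hconst (s : 𝕜) : HasDerivAt (fun s => NormedSpace.exp ((z - s) • A) (F s)) 0 s := by
    have hexp : HasDerivAt (fun s : 𝕜 => NormedSpace.exp ((z - s) • A))
        ((-1 : 𝕜) • (NormedSpace.exp ((z - s) • A) * A)) s :=
      (hasDerivAt_exp_smul_const (𝕂 := 𝕜) A (z - s)).scomp s ((hasDerivAt_id s).const_sub z)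
    exact (hexp.clm_apply (hF s)).congr_deriv (by simp)
  simpa using is_const_of_deriv_eq_zero (fun s => (hconst s).differentiableAt)
    (fun s => (hconst s).deriv) z 0

variable {n : ℕ}

/-- The polynomials `Qₖ` with `e^{μz} Qₖ(z) = (∏_{i < k} (d/dz - lᵢ)) (e^{μz} P(z))`. -/
noncomputable def twistedDerivative {R : Type*} [CommRing R] (l : Fin n → R) (μ : R) (P : R[X])
    (k : Fin (n + 1)) : R[X] :=
  aeval (derivative : Module.End R R[X]) (Fin.partialProd (fun i => X + C (μ - l i)) k) P

section

variable {R : Type*} [CommRing R] (l : Fin n → R) (μ : R) (P : R[X])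

lemma twistedDerivative_zero : twistedDerivative l μ P 0 = P := by
  simp [twistedDerivative]

lemma twistedDerivative_succ (k : Fin n) :
    twistedDerivative l μ P k.succ =
      derivative (twistedDerivative l μ P k.castSucc) +
        C (μ - l k) * twistedDerivative l μ P k.castSucc := by
  simp [twistedDerivative, Fin.partialProd_succ, mul_comm _ (X + _), sub_mul, smul_eq_C_mul]

variable {P μ l}

lemma twistedDerivative_last (hP : P.natDegree < (l ⁻¹' {μ}).ncard) :
    twistedDerivative l μ P (Fin.last n) = 0 := by
  classical
  set m := (l ⁻¹' {μ}).ncard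
  have hdvd : (X : R[X]) ^ m ∣ Fin.partialProd (fun i => X + C (μ - l i)) (Fin.last n) := by
    have hprod : Fin.partialProd (fun i => X + C (μ - l i)) (Fin.last n) =
        ∏ i, (X + C (μ - l i)) := by
      simp [Fin.partialProd, List.prod_ofFn, List.take_of_length_le]
    have hpow : ∏ i with l i = μ, (X + C (μ - l i)) = X ^ m := by
      rw [Finset.prod_congr rfl (g := fun _ => X) (by simp +contextual), Finset.prod_const]
      simp [m, ← Set.ncard_coe_finset, Set.preimage]
    rw [hprod, ← hpow]
    exact Finset.prod_dvd_prod_of_subset _ _ _ (Finset.filter_subset _ _)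
  obtain ⟨q, hq⟩ := hdvd
  rw [twistedDerivative, hq, mul_comm, map_mul, Module.End.mul_apply, map_pow, aeval_X,
    Module.End.pow_apply, iterate_derivative_eq_zero hP, map_zero]

end

theorem exists_exp_bidiagonal_apply_zero [NeZero n] {l : Fin n → ℂ} {μ : ℂ} {P : ℂ[X]}
    (hP : P.natDegree < (l ⁻¹' {μ}).ncard) :
    ∃ u : Fin n → ℂ, ∀ z : ℂ,
      Complex.exp (μ * z) * P.eval z = NormedSpace.exp (z • bidiagonal l) u 0 := by
  set Q := twistedDerivative l μ P
  set F : ℂ → Fin n → ℂ := fun z k => Complex.exp (μ * z) * (Q k.castSucc).eval z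
  have hF (z : ℂ) : HasDerivAt F (bidiagonal l (F z)) z := by
    rw [hasDerivAt_pi]
    intro k
    have hnext : (if h : (k : ℕ) + 1 < n then F z ⟨k + 1, h⟩ else 0) =
        Complex.exp (μ * z) * (Q k.succ).eval z := by
      split_ifs with h
      · rfl
      · have hlast : k.succ = Fin.last n := Fin.ext (by simp; omega)
        simp [hlast, Q, twistedDerivative_last hP]
    have hexp : HasDerivAt (fun z : ℂ => Complex.exp (μ * z)) (Complex.exp (μ * z) * (μ * 1)) z :=
      ((hasDerivAt_id z).const_mul μ).cexp
    refine (hexp.mul ((Q k.castSucc).hasDerivAt z)).congr_deriv ?_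
    rw [bidiagonal_apply, hnext]
    simp only [Q, F, twistedDerivative_succ, eval_add, eval_mul, eval_C]
    ring
  refine ⟨F 0, fun z => ?_⟩
  rw [← eq_exp_smul_apply_of_hasDerivAt hF z]
  simp [F, Q, twistedDerivative_zero]

end ExpPolynomial

section SamplingDomain

open Polynomial

variable {n : ℕ} [NeZero n]

/-- The tuples `l` for which the evolution `exp (z • bidiagonal l)` has exponential type less than
`r` and its state is determined by the first coordinate at the times `0, h, …, (n - 1) h`. -/
def samplingDomain (r h : ℝ) : Set (Fin n → ℂ) :=
  {l | ‖bidiagonal l‖ < r ∧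
    Injective (observability (.proj 0) n (NormedSpace.exp ((h : ℂ) • bidiagonal l)))}

lemma eventually_mem_samplingDomain {R r : ℝ} (hr : R + ‖shift ℂ n‖ < r) :
    ∀ᶠ h : ℝ in 𝓝[≠] 0, ∀ l : Fin n → ℂ, ‖l‖ ≤ R → l ∈ samplingDomain r h := by
  have hK : IsCompact (bidiagonal '' Metric.closedBall (0 : Fin n → ℂ) R) :=
    (isCompact_closedBall 0 R).image continuous_bidiagonal
  have hobs := eventually_observability_exp_injective hK <|
    Set.forall_mem_image.2 fun l _ => observability_bidiagonal_injective l
  have hreal : Tendsto Complex.ofReal (𝓝[≠] 0) (𝓝[≠] 0) :=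
    Complex.continuous_ofReal.continuousWithinAt.tendsto_nhdsWithin fun x hx => by simpa using hx
  filter_upwards [hreal.eventually hobs] with h hh l hl
  refine ⟨(norm_bidiagonal_le l).trans_lt (by linarith), hh _ ⟨l, by simpa using hl, rfl⟩⟩

theorem exists_sampling_kernel_exp_mul_eval {X : Type*} [TopologicalSpace X] {φ w : X → ℝ} {r : ℝ}
    (hr : 0 < r) (h : ℝ) (hφ : Continuous φ) (hw : Continuous w) (hφw : ∀ x, |φ x| ≤ w x) :
    ∃ c : Fin n → (Fin n → ℂ) → X →ᵇ ℂ, ∀ l ∈ samplingDomain r h,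
      (∀ j, AnalyticAt ℂ (c j) l) ∧
      ∀ (μ : ℂ) (P : ℂ[X]), P.natDegree < (l ⁻¹' {μ}).ncard → ∀ x,
        Complex.exp (μ * φ x) * P.eval (φ x : ℂ) =
          ∑ j : Fin n, Complex.exp (μ * ((j : ℕ) * h)) * P.eval ((j : ℕ) * h : ℂ) *
            (c j l x * Real.exp (r * w x)) := by
  obtain ⟨c, hc⟩ := exists_sampling_kernel (n := n) (.proj 0) (h : ℂ) hr hφ hw hφw
  refine ⟨fun j l => c j (bidiagonal l), fun l hl => ?_⟩
  obtain ⟨hanalytic, hrepr⟩ := hc (bidiagonal l) hl.1 hl.2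
  refine ⟨fun j => (hanalytic j).comp (analyticAt_bidiagonal l), fun μ P hP x => ?_⟩
  obtain ⟨u, hu⟩ := exists_exp_bidiagonal_apply_zero hP
  simpa only [hu, ContinuousLinearMap.proj_apply] using hrepr u x

end SamplingDomain

section EuclideanSpace

variable {ι V : Type*} {n : ℕ}

/-- Evaluation of a tuple of `ℂ`-valued functionals at `v`, as a `ℂ`-linear map. -/
noncomputable def evalTuple [NormedAddCommGroup V] [NormedSpace ℝ V] (v : V) :
    (Fin n → V →L[ℝ] ℂ) →L[ℂ] (Fin n → ℂ) where
  toFun lam i := lam i v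
  map_add' _ _ := rfl
  map_smul' _ _ := rfl
  cont := by fun_prop

lemma norm_evalTuple_apply_le [NormedAddCommGroup V] [NormedSpace ℝ V] (v : V)
    (lam : Fin n → V →L[ℝ] ℂ) : ‖evalTuple v lam‖ ≤ ‖lam‖ * ‖v‖ :=
  (pi_norm_le_iff_of_nonneg (by positivity)).2 fun i =>
    (lam i).le_of_opNorm_le (norm_le_pi_norm lam i) v

/-- The point with coordinates `J k * h`. -/
noncomputable def grid (h : ℝ) (J : ι → Fin n) : EuclideanSpace ℝ ι :=
  WithLp.toLp 2 fun k => (J k : ℕ) * h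

lemma grid_injective {h : ℝ} (hh : h ≠ 0) : Injective (grid h : (ι → Fin n) → _) := by
  intro J J' hJ
  ext k
  simpa [grid, hh] using congrArg (fun x : EuclideanSpace ℝ ι => x k) hJ

lemma eventually_grid_mem [Finite ι] {U : Set (EuclideanSpace ℝ ι)} (hU : U ∈ 𝓝 0) :
    ∀ᶠ h in 𝓝 (0 : ℝ), ∀ J : ι → Fin n, grid h J ∈ U := by
  refine eventually_all.2 fun J => ?_
  have hcont : Continuous fun h : ℝ => grid h J := by
    unfold grid
    fun_prop
  have hzero : grid 0 J = 0 := by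
    ext k
    simp [grid]
  exact hcont.continuousAt.eventually_mem (hzero ▸ hU)

variable [Fintype ι]

/-- The functions `v ↦ e^{μ v} ∏ₖ vₖ^{αₖ}` whose exponents `αₖ` are all less than the multiplicity
of `μ` in the tuple `lam`. -/
def expMonomials (lam : Fin n → EuclideanSpace ℝ ι →L[ℝ] ℂ) : Set (EuclideanSpace ℝ ι → ℂ) :=
  {f | ∃ (μ : EuclideanSpace ℝ ι →L[ℝ] ℂ) (α : ι → ℕ), (∀ k, α k < (lam ⁻¹' {μ}).ncard) ∧
    f = fun v => Complex.exp (μ v) * ∏ k, (v k : ℂ) ^ α k}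

lemma polyExpSpace_subset_span_expMonomials {d : ℕ}
    (lam : Fin n → EuclideanSpace ℝ (Fin d) →L[ℝ] ℂ) :
    polyExpSpace lam ⊆ Submodule.span ℂ (expMonomials lam) := by
  classical
  rintro f ⟨P, hP, hf⟩
  have hexpand : f = ∑ μ ∈ Finset.univ.image lam, ∑ α ∈ (P μ).support,
      (P μ).coeff α • fun v => Complex.exp (μ v) * ∏ k, (v k : ℂ) ^ α k := by
    funext v
    simp [hf, MvPolynomial.eval_eq', Finset.mul_sum, mul_left_comm]
  rw [hexpand]
  refine sum_mem fun μ hμ => sum_mem fun α hα => Submodule.smul_mem _ _ <|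
    Submodule.subset_span ⟨μ, α, fun k => ?_, rfl⟩
  obtain ⟨i, -, rfl⟩ := Finset.mem_image.1 hμ
  calc α k ≤ (P (lam i)).degreeOf k := MvPolynomial.monomial_le_degreeOf k hα
    _ ≤ (P (lam i)).totalDegree := MvPolynomial.degreeOf_le_totalDegree _ k
    _ < _ := hP i
    _ = (lam ⁻¹' {lam i}).ncard := by simp [← Set.ncard_coe_finset, Set.preimage]

variable [DecidableEq ι]

lemma exp_mul_prod_pow_eq_prod (μ : EuclideanSpace ℝ ι →L[ℝ] ℂ) (α : ι → ℕ)
    (v : EuclideanSpace ℝ ι) :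
    Complex.exp (μ v) * ∏ k, (v k : ℂ) ^ α k =
      ∏ k, Complex.exp (μ (EuclideanSpace.single k 1) * v k) * (v k : ℂ) ^ α k := by
  have hμ : μ v = ∑ k, μ (EuclideanSpace.single k 1) * v k := by
    conv_lhs => rw [← (EuclideanSpace.basisFun ι ℝ).sum_repr v]
    simp [mul_comm]
  rw [hμ, Complex.exp_sum, Finset.prod_mul_distrib]

theorem exists_sampling_kernel_span_expMonomials [NeZero n] {r : ℝ} (hr : 0 < r) (h : ℝ) :
    ∃ K : (ι → Fin n) → (Fin n → EuclideanSpace ℝ ι →L[ℝ] ℂ) → EuclideanSpace ℝ ι →ᵇ ℂ,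
      ∀ lam, (∀ k, evalTuple (EuclideanSpace.single k 1) lam ∈ samplingDomain r h) →
        (∀ J, AnalyticAt ℂ (K J) lam) ∧
        ∀ f ∈ Submodule.span ℂ (expMonomials lam), ∀ v,
          f v = ∑ J, f (grid h J) * K J lam v * Real.exp (Fintype.card ι * r * ‖v‖) := by
  choose c hc using fun k : ι => exists_sampling_kernel_exp_mul_eval (n := n) (w := norm) hr h
    (φ := fun v : EuclideanSpace ℝ ι => v k) (by fun_prop) continuous_norm
    fun v => PiLp.norm_apply_le v k
  refine ⟨fun J lam => ∏ k, c k (J k) (evalTuple (EuclideanSpace.single k 1) lam),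
    fun lam hlam => ⟨fun J => ?_, fun f hf v => ?_⟩⟩
  · exact Finset.analyticAt_fun_prod _ fun k _ =>
      ((hc k _ (hlam k)).1 (J k)).comp (ContinuousLinearMap.analyticAt _ lam)
  induction hf using Submodule.span_induction with
  | zero => simp
  | add f g _ _ hf hg => simp only [Pi.add_apply, hf, hg, add_mul, Finset.sum_add_distrib]
  | smul a f _ hf => simp only [Pi.smul_apply, hf, smul_eq_mul, Finset.mul_sum, mul_assoc]
  | mem f hf =>
    obtain ⟨μ, α, hα, rfl⟩ := hf
    have haxis (k : ι) : (lam ⁻¹' {μ}).ncard ≤ (evalTuple (EuclideanSpace.single k 1) lam ⁻¹'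
        {μ (EuclideanSpace.single k 1)}).ncard :=
      Set.ncard_le_ncard fun i (hi : lam i = μ) => DFunLike.congr_fun hi _
    have hweight : (Real.exp (Fintype.card ι * r * ‖v‖) : ℂ) =
        ∏ _k : ι, (Real.exp (r * ‖v‖) : ℂ) := by
      simp [← Complex.exp_nat_mul, mul_assoc]
    have hcoord (k : ι) := (hc k _ (hlam k)).2 (μ (EuclideanSpace.single k 1)) (.X ^ α k)
      (by simpa using (hα k).trans_le (haxis k)) v
    simp only [Polynomial.eval_pow, Polynomial.eval_X] at hcoord
    simp only [exp_mul_prod_pow_eq_prod, hcoord, Finset.prod_univ_sum, Fintype.piFinset_univ,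
      hweight, BoundedContinuousFunction.coe_prod, Finset.prod_apply, ← Finset.prod_mul_distrib]
    simp [grid, mul_assoc]

end EuclideanSpace

end PolyExp

open PolyExp in
/-- Local holomorphic sections (by restriction to a suitable finite set `Y`) for the
family of spaces of polynomial exponential functions, inside weighted sup-norm spaces. -/
theorem stmt_3 (d n : ℕ) (hd : 1 ≤ d) (hn : 1 ≤ n) :
    ∀ R' : ℝ, 0 < R' → ∀ U : Set (EuclideanSpace ℝ (Fin d)), IsOpen U →
      (0 : EuclideanSpace ℝ (Fin d)) ∈ U →
    ∃ R₀ : ℝ, 0 < R₀ ∧ ∀ R : ℝ, R₀ < R →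
      ∃ (Y : Finset (EuclideanSpace ℝ (Fin d)))
        (Φ : EuclideanSpace ℝ (Fin d) →
          (Fin n → (EuclideanSpace ℝ (Fin d) →L[ℝ] ℂ)) →
          BoundedContinuousFunction (EuclideanSpace ℝ (Fin d)) ℂ),
        (Y : Set (EuclideanSpace ℝ (Fin d))) ⊆ U ∧
        (∀ y ∈ Y, AnalyticOnNhd ℂ (Φ y) {lam | ‖lam‖ < R'}) ∧
        ∀ lam : Fin n → (EuclideanSpace ℝ (Fin d) →L[ℝ] ℂ), ‖lam‖ < R' →
          ∀ f ∈ polyExpSpace lam, ∀ v,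
            f v = ∑ y ∈ Y, f y * Φ y lam v * Real.exp (R * ‖v‖) := by
  intro R' hR' U hU h0U
  have : NeZero n := ⟨by omega⟩
  have hd0 : (0 : ℝ) < d := by exact_mod_cast hd
  refine ⟨d * (R' + ‖shift ℂ n‖), by positivity, fun R hR => ?_⟩
  have hr : R' + ‖shift ℂ n‖ < R / d := (lt_div_iff₀' hd0).2 hR
  obtain ⟨h, ⟨hdomain, hgrid⟩, hh⟩ := (((eventually_mem_samplingDomain hr).and
    (nhdsWithin_le_nhds (eventually_grid_mem (n := n) (hU.mem_nhds h0U)))).and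
      self_mem_nhdsWithin).exists
  have hinj : Injective (grid h : (Fin d → Fin n) → _) := grid_injective hh
  obtain ⟨K, hK⟩ := exists_sampling_kernel_span_expMonomials (ι := Fin d) (n := n)
    (r := R / d) (lt_of_le_of_lt (by positivity) hr) h
  have hball (lam : Fin n → EuclideanSpace ℝ (Fin d) →L[ℝ] ℂ) (hlam : ‖lam‖ < R') (k : Fin d) :
      evalTuple (EuclideanSpace.single k 1) lam ∈ samplingDomain (R / d) h :=
    hdomain _ ((norm_evalTuple_apply_le _ lam).trans (by simpa using hlam.le))
  refine ⟨(Finset.univ : Finset (Fin d → Fin n)).image (grid h), fun y => K (invFun (grid h) y), ?_,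
    fun y _ lam hlam => (hK lam (hball lam hlam)).1 _, fun lam hlam f hf v => ?_⟩
  · simpa [Set.range_subset_iff] using hgrid
  · have hrepr := (hK lam (hball lam hlam)).2 f (polyExpSpace_subset_span_expMonomials lam hf) v
    rw [Fintype.card_fin, mul_div_cancel₀ R hd0.ne'] at hrepr
    rw [Finset.sum_image hinj.injOn]
    simpa only [leftInverse_invFun hinj _] using hrepr
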